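/- Let G be a connected, non-complete strongly regular graph with parameters (n, k, λ, μ) such that 2·max(λ, μ) ≤ k or 2λ < k. Then G admits a uniform avoidance coupling of two simple random walks. -/

import Mathlib

open Finset

/-- A uniform avoidance coupling of two simple random walks on `G`:
stochasticity, stationarity, no collision, avoidance, and uniform faithfulness. -/
def IsUAC {V : Type*} [Fintype V] [DecidableEq V] (G : SimpleGraph V) [DecidableRel G.Adj]
    (T : V × V → V × V → ℝ) (s : V × V → ℝ) : Prop :=
  (∀ p q : V × V, 0 ≤ T p q) ∧
  (∀ p : V × V, ∑ q : V × V, T p q = 1) ∧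
  (∀ p : V × V, 0 ≤ s p) ∧
  (∑ p : V × V, s p) = 1 ∧
  (∀ q : V × V, ∑ p : V × V, s p * T p q = s q) ∧
  (∀ x : V, s (x, x) = 0) ∧
  (∀ x y x' y' : V, 0 < s (x, y) → 0 < T (x, y) (x', y') → x' ≠ y ∧ y' ≠ x') ∧
  (∀ x y : V, 0 < s (x, y) →
    (∀ x' : V, (∑ y' : V, T (x, y) (x', y')) =
      if G.Adj x x' then 1 / (G.degree x : ℝ) else 0) ∧
    (∀ y' : V, (∑ x' : V, T (x, y) (x', y')) =
      if G.Adj y y' then 1 / (G.degree y : ℝ) else 0))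

theorem uac_stationary {ι : Type*} [Fintype ι] [DecidableEq ι] [Nonempty ι] (T : ι → ι → ℝ)
    (h0 : ∀ p q, 0 ≤ T p q) (h1 : ∀ p, ∑ q, T p q = 1) :
    ∃ s : ι → ℝ, (∀ p, 0 ≤ s p) ∧ ∑ p, s p = 1 ∧ ∀ q, ∑ p, s p * T p q = s q := by
  have hdet : (Matrix.of T - 1).det = 0 := by
    rw [← Matrix.exists_mulVec_eq_zero_iff]
    refine ⟨fun _ => 1, ?_, ?_⟩
    · intro h
      have := congrFun h (Classical.arbitrary ι)
      simp at this
    · rw [Matrix.sub_mulVec, Matrix.one_mulVec]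
      ext p
      simp [Matrix.mulVec, dotProduct, h1]
  rw [← Matrix.exists_vecMul_eq_zero_iff] at hdet
  obtain ⟨v, hv, hvT⟩ := hdet
  rw [Matrix.vecMul_sub, Matrix.vecMul_one, sub_eq_zero] at hvT
  have hvq : ∀ q, ∑ p, v p * T p q = v q := by
    intro q
    have := congrFun hvT q
    simpa [Matrix.vecMul, dotProduct] using this
  have hle : ∀ q ∈ (univ : Finset ι), |v q| ≤ ∑ p, |v p| * T p q := by
    intro q _
    have h := hvq q
    rw [← h]
    refine (Finset.abs_sum_le_sum_abs _ _).trans (le_of_eq ?_)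
    refine Finset.sum_congr rfl fun p _ => ?_
    rw [abs_mul, abs_of_nonneg (h0 p q)]
  have hsum : ∑ q, |v q| = ∑ q, ∑ p, |v p| * T p q := by
    rw [Finset.sum_comm]
    refine Finset.sum_congr rfl fun p _ => ?_
    rw [← Finset.mul_sum, h1, mul_one]
  have heq := (Finset.sum_eq_sum_iff_of_le hle).1 hsum
  have hpos : 0 < ∑ q, |v q| := by
    obtain ⟨i, hi⟩ := Function.ne_iff.1 hv
    refine Finset.sum_pos' (fun _ _ => abs_nonneg _) ⟨i, mem_univ _, abs_pos.2 (by simpa using hi)⟩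
  refine ⟨fun p => |v p| / ∑ q, |v q|, fun p => by positivity, ?_, fun q => ?_⟩
  · rw [← Finset.sum_div, div_self hpos.ne']
  · simp only [div_mul_eq_mul_div]
    rw [← Finset.sum_div, ← heq q (mem_univ _)]

section
variable {V : Type*} [Fintype V] [DecidableEq V] (G : SimpleGraph V) [DecidableRel G.Adj]

/-- The combinatorial core: the Hall condition. -/
theorem uac_hall (k lam mu : ℕ)
    (hdeg : ∀ v, (G.neighborFinset v).card = k)
    (hlam : ∀ v w, G.Adj v w → (G.neighborFinset v ∩ G.neighborFinset w).card = lam)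
    (hmu : ∀ v w, v ≠ w → ¬ G.Adj v w → (G.neighborFinset v ∩ G.neighborFinset w).card = mu)
    (hparam : (2 * lam ≤ k ∧ 2 * mu ≤ k) ∨ 2 * lam < k)
    (x y : V) (hxy : x ≠ y) (hnadj : ¬ G.Adj x y)
    (S T : Finset V) (hS : S ⊆ G.neighborFinset x) (hT : T ⊆ G.neighborFinset y)
    (hbad : ∀ s ∈ S, ∀ t ∈ T, s = t ∨ G.Adj s t) : S.card + T.card ≤ k := by
  by_contra hgt
  push Not at hgt
  have hSx : ∀ s ∈ S, G.Adj x s := fun s hs => by simpa using hS hs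
  have hTy : ∀ t ∈ T, G.Adj y t := fun s hs => by simpa using hT hs
  have hSk : S.card ≤ k := (hdeg x) ▸ card_le_card hS
  have hTk : T.card ≤ k := (hdeg y) ▸ card_le_card hT
  have hxT : x ∉ T := fun h => hnadj (hTy x h).symm
  have hyS : y ∉ S := fun h => hnadj (hSx y h)
  have hxS : x ∉ S := fun h => (hSx x h).ne rfl
  have hyT : y ∉ T := fun h => (hTy y h).ne rfl
  -- degree facts
  have F1 : ∀ s ∈ S, G.Adj y s → T ⊆ insert s (G.neighborFinset s ∩ G.neighborFinset y) := by
    intro s hs hys t ht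
    rcases hbad s hs t ht with h | h
    · simp [h]
    · simp [h, hTy t ht]
  have F1c : ∀ s, G.Adj y s → (insert s (G.neighborFinset s ∩ G.neighborFinset y)).card = lam + 1 := by
    intro s hys
    rw [card_insert_of_notMem (by simp), hlam s y hys.symm]
  have F1' : ∀ t ∈ T, G.Adj x t → S ⊆ insert t (G.neighborFinset t ∩ G.neighborFinset x) := by
    intro t ht hxt s hs
    rcases hbad s hs t ht with h | h
    · simp [h]
    · simp [h.symm, hSx s hs]
  have F1c' : ∀ s, G.Adj x s → (insert s (G.neighborFinset s ∩ G.neighborFinset x)).card = lam + 1 := by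
    intro s hys
    rw [card_insert_of_notMem (by simp), hlam s x hys.symm]
  have F2 : ∀ s ∈ S, ¬ G.Adj y s → T.card ≤ mu := by
    intro s hs hys
    rw [← hmu s y (fun h => hyS (h ▸ hs)) (fun h => hys h.symm)]
    refine card_le_card fun t ht => ?_
    rcases hbad s hs t ht with h | h
    · exact absurd (h ▸ hTy t ht) hys
    · simp [h, hTy t ht]
  have F2' : ∀ t ∈ T, ¬ G.Adj x t → S.card ≤ mu := by
    intro s hs hys
    rw [← hmu s x (fun h => hxT (h ▸ hs)) (fun h => hys h.symm)]
    refine card_le_card fun t ht => ?_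
    rcases hbad t ht s hs with h | h
    · exact absurd (h ▸ hSx t ht) hys
    · simp [h.symm, hSx t ht]
  have hC := hmu x y hxy hnadj
  have hCx : mu + (G.neighborFinset x \ G.neighborFinset y).card = k := by
    rw [← hC, card_inter_add_card_sdiff, hdeg]
  have hCy : mu + (G.neighborFinset y \ G.neighborFinset x).card = k := by
    rw [← hC, inter_comm, card_inter_add_card_sdiff, hdeg]
  have F3 : ∃ c ∈ S, G.Adj y c := by
    by_contra hno
    push Not at hno
    have h1 : S.card ≤ (G.neighborFinset x \ G.neighborFinset y).card :=
      card_le_card fun s hs => by simp [hSx s hs, hno s hs]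
    obtain ⟨s, hs⟩ : S.Nonempty := by
      rw [← card_pos]; omega
    have := F2 s hs (hno s hs)
    omega
  have F3' : ∃ c ∈ T, G.Adj x c := by
    by_contra hno
    push Not at hno
    have h1 : T.card ≤ (G.neighborFinset y \ G.neighborFinset x).card :=
      card_le_card fun s hs => by simp [hTy s hs, hno s hs]
    obtain ⟨s, hs⟩ : T.Nonempty := by
      rw [← card_pos]; omega
    have := F2' s hs (hno s hs)
    omega
  obtain ⟨c, hcS, hcy⟩ := F3
  obtain ⟨c', hcT', hcx'⟩ := F3'
  have hTl : T.card ≤ lam + 1 := (F1c c hcy) ▸ card_le_card (F1 c hcS hcy)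
  have hSl : S.card ≤ lam + 1 := (F1c' c' hcx') ▸ card_le_card (F1' c' hcT' hcx')
  have E1 : T.card = lam + 1 → ∀ s ∈ S, G.Adj y s → s ∈ T := by
    intro h s hs hys
    rw [eq_of_subset_of_card_le (F1 s hs hys) (by rw [F1c s hys, h])]
    simp
  have E1' : S.card = lam + 1 → ∀ t ∈ T, G.Adj x t → t ∈ S := by
    intro h s hs hys
    rw [eq_of_subset_of_card_le (F1' s hs hys) (by rw [F1c' s hys, h])]
    simp
  have hk2 : ∀ c, G.Adj x c → G.Adj y c → 2 ≤ k := by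
    intro c h1 h2
    rw [← hdeg c, ← card_pair hxy]
    exact card_le_card fun z hz => by
      simp only [mem_insert, mem_singleton] at hz
      rcases hz with rfl | rfl <;> simp [h1.symm, h2.symm]
  -- two distinct common elements of S and T are impossible
  have Two : ∀ a b, a ≠ b → a ∈ S → a ∈ T → b ∈ S → b ∈ T →
      S.card < lam + 1 ∧ T.card < lam + 1 := by
    intro a b hab haS haT hbS hbT
    have hadj : G.Adj a b := (hbad a haS b hbT).resolve_left hab
    have key : ∀ U : Finset V, x ∉ U → y ∉ U → (∀ u ∈ U, u ≠ a → G.Adj a u) →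
        (∀ u ∈ U, u ≠ b → G.Adj b u) → a ∈ U → b ∈ U → U.card < lam + 1 := by
      intro U hxU hyU ha hb haU hbU
      have hsub : insert x (insert y ((U.erase a).erase b)) ⊆
          G.neighborFinset a ∩ G.neighborFinset b := by
        intro z hz
        simp only [mem_insert, mem_erase] at hz
        rcases hz with rfl | rfl | ⟨h1, h2, h3⟩
        · simp [(hSx a haS).symm, (hSx b hbS).symm]
        · simp [(hTy a haT).symm, (hTy b hbT).symm]
        · simp [ha z h3 h2, hb z h3 h1]
      have hc := card_le_card hsub
      rw [hlam a b hadj, card_insert_of_notMem (by simp [hxy, hxU]),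
        card_insert_of_notMem (by simp [hyU]), card_erase_of_mem (by simp [hab.symm, hbU]),
        card_erase_of_mem haU] at hc
      omega
    constructor
    · exact key S hxS hyS (fun u hu hne => ((hbad u hu a haT).resolve_left hne).symm)
        (fun u hu hne => ((hbad u hu b hbT).resolve_left hne).symm) haS hbS
    · exact key T hxT hyT (fun u hu hne => (hbad a haS u hu).resolve_left hne.symm)
        (fun u hu hne => (hbad b hbS u hu).resolve_left hne.symm) haT hbT
  rcases Nat.lt_or_ge (2 * lam) k with hlt | hge
  · -- k = 2 lam + 1
    have hSc : S.card = lam + 1 := by omega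
    have hTc : T.card = lam + 1 := by omega
    have hcT := E1 hTc c hcS hcy
    have := hk2 c (hSx c hcS) hcy
    obtain ⟨p, hpS, hpc⟩ := Finset.exists_mem_ne (s := S) (by omega) c
    by_cases hpT : p ∈ T
    · have := Two p c hpc hpS hpT hcS hcT
      omega
    · have hadj : G.Adj p c := (hbad p hpS c hcT).resolve_left hpc
      have hsub : insert x (T.erase c) ⊆ G.neighborFinset p ∩ G.neighborFinset c := by
        intro z hz
        simp only [mem_insert, mem_erase] at hz
        rcases hz with rfl | ⟨h1, h2⟩
        · simp [(hSx p hpS).symm, (hSx c hcS).symm]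
        · have hpz : p ≠ z := fun h => hpT (h ▸ h2)
          simp [(hbad p hpS z h2).resolve_left hpz, (hbad c hcS z h2).resolve_left h1.symm]
      have hc := card_le_card hsub
      rw [hlam p c hadj, card_insert_of_notMem (by simp [hxT]), card_erase_of_mem hcT] at hc
      omega
  · -- k = 2 lam
    have hml : mu ≤ lam := by omega
    have hCsub : ∀ U : Finset V, (∀ u ∈ U, G.Adj x u ∧ G.Adj y u) →
        U ⊆ G.neighborFinset x ∩ G.neighborFinset y := by
      intro U hU u hu
      simp [hU u hu]
    by_cases hSc : S.card = lam + 1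
    · obtain ⟨p, hpS, hpy⟩ : ∃ p ∈ S, ¬ G.Adj y p := by
        by_contra hno
        push Not at hno
        have := card_le_card (hCsub S fun u hu => ⟨hSx u hu, hno u hu⟩)
        omega
      have hTm := F2 p hpS hpy
      have hTx : ∀ t ∈ T, G.Adj x t := by
        intro t ht
        by_contra h
        have := F2' t ht h
        omega
      have hTS : ∀ t ∈ T, t ∈ S := fun t ht => E1' hSc t ht (hTx t ht)
      have h2 := hk2 c (hSx c hcS) hcy
      rcases Nat.lt_or_ge 1 T.card with h1 | h1
      · obtain ⟨q, hq, hqc⟩ := Finset.exists_mem_ne h1 c'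
        have := Two q c' hqc (hTS q hq) hq (hTS c' hcT') hcT'
        omega
      · -- k = 2, three neighbours of c'
        have hpc : p ≠ c' := fun h => hpy (h ▸ hTy c' hcT')
        have hadj := (hbad p hpS c' hcT').resolve_left hpc
        have hsub : insert x (insert y {p}) ⊆ G.neighborFinset c' := by
          intro z hz
          simp only [mem_insert, mem_singleton] at hz
          rcases hz with rfl | rfl | rfl
          · simp [hcx'.symm]
          · simp [(hTy c' hcT').symm]
          · simp [hadj.symm]
        have hc := card_le_card hsub
        have hxp : x ≠ p := (hSx p hpS).ne
        have hyp : y ≠ p := fun h => hyS (h ▸ hpS)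
        rw [hdeg, card_insert_of_notMem (by simp [hxy, hxp]),
          card_insert_of_notMem (by simp [hyp]), card_singleton] at hc
        omega
    · have hTc : T.card = lam + 1 := by omega
      obtain ⟨p, hpT, hpx⟩ : ∃ p ∈ T, ¬ G.Adj x p := by
        by_contra hno
        push Not at hno
        have := card_le_card (hCsub T fun u hu => ⟨hno u hu, hTy u hu⟩)
        omega
      have hSm := F2' p hpT hpx
      have hSy : ∀ t ∈ S, G.Adj y t := by
        intro t ht
        by_contra h
        have := F2 t ht h
        omega
      have hST : ∀ t ∈ S, t ∈ T := fun t ht => E1 hTc t ht (hSy t ht)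
      have h2 := hk2 c (hSx c hcS) hcy
      rcases Nat.lt_or_ge 1 S.card with h1 | h1
      · obtain ⟨q, hq, hqc⟩ := Finset.exists_mem_ne h1 c
        have := Two q c hqc hq (hST q hq) hcS (hST c hcS)
        omega
      · have hpc : c ≠ p := fun h => hpx (h ▸ hSx c hcS)
        have hadj := (hbad c hcS p hpT).resolve_left hpc
        have hsub : insert x (insert y {p}) ⊆ G.neighborFinset c := by
          intro z hz
          simp only [mem_insert, mem_singleton] at hz
          rcases hz with rfl | rfl | rfl
          · simp [(hSx c hcS).symm]
          · simp [hcy.symm]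
          · simp [hadj]
        have hc := card_le_card hsub
        have hyp : y ≠ p := (hTy p hpT).ne
        have hxp : x ≠ p := fun h => hxT (h ▸ hpT)
        rw [hdeg, card_insert_of_notMem (by simp [hxy, hxp]),
          card_insert_of_notMem (by simp [hyp]), card_singleton] at hc
        omega

theorem uac_match (k lam mu : ℕ)
    (hdeg : ∀ v, (G.neighborFinset v).card = k)
    (hlam : ∀ v w, G.Adj v w → (G.neighborFinset v ∩ G.neighborFinset w).card = lam)
    (hmu : ∀ v w, v ≠ w → ¬ G.Adj v w → (G.neighborFinset v ∩ G.neighborFinset w).card = mu)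
    (hparam : (2 * lam ≤ k ∧ 2 * mu ≤ k) ∨ 2 * lam < k)
    (x y : V) (hxy : x ≠ y) (hnadj : ¬ G.Adj x y) :
    ∃ f : V → V, (∀ a, G.Adj x a → G.Adj y (f a) ∧ a ≠ f a ∧ ¬ G.Adj a (f a)) ∧
      ∀ b, G.Adj y b → ∃ a, G.Adj x a ∧ ∀ a', (G.Adj x a' ∧ b = f a') ↔ a' = a := by
  classical
  let t : {a // a ∈ G.neighborFinset x} → Finset V :=
    fun a => (G.neighborFinset y).filter fun b => a.1 ≠ b ∧ ¬ G.Adj a.1 b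
  have hall : ∀ s : Finset {a // a ∈ G.neighborFinset x}, s.card ≤ (s.biUnion t).card := by
    intro s
    have hsub : s.biUnion t ⊆ G.neighborFinset y := by
      intro b hb
      obtain ⟨a, _, hb⟩ := mem_biUnion.1 hb
      exact (mem_filter.1 hb).1
    have h := uac_hall G k lam mu hdeg hlam hmu hparam x y hxy hnadj
      (s.map (Function.Embedding.subtype _)) (G.neighborFinset y \ s.biUnion t)
      (by
        intro a ha
        obtain ⟨a, _, rfl⟩ := mem_map.1 ha
        exact a.2) sdiff_subset
      (by
        intro a ha b hb
        obtain ⟨a, has, rfl⟩ := mem_map.1 ha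
        rw [mem_sdiff] at hb
        by_contra hno
        push Not at hno
        exact hb.2 (mem_biUnion.2 ⟨a, has, mem_filter.2 ⟨hb.1, hno⟩⟩))
    rw [card_map] at h
    have h2 := card_sdiff_add_card_eq_card hsub
    rw [hdeg] at h2
    omega
  obtain ⟨f, hinj, hf⟩ := (Finset.all_card_le_biUnion_card_iff_exists_injective t).1 hall
  have hsurj : ∀ b ∈ G.neighborFinset y, ∃ a, f a = b := by
    have himg : univ.image f = G.neighborFinset y := by
      apply eq_of_subset_of_card_le
      · intro b hb
        obtain ⟨a, _, rfl⟩ := mem_image.1 hb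
        exact (mem_filter.1 (hf a)).1
      · rw [card_image_of_injective _ hinj, card_univ, Fintype.card_coe, hdeg, hdeg]
    intro b hb
    rw [← himg] at hb
    obtain ⟨a, _, h⟩ := mem_image.1 hb
    exact ⟨a, h⟩
  refine ⟨fun a => if h : a ∈ G.neighborFinset x then f ⟨a, h⟩ else a, ?_, ?_⟩
  · intro a ha
    have ha' : a ∈ G.neighborFinset x := by simpa using ha
    have := mem_filter.1 (hf ⟨a, ha'⟩)
    simp only [ha', dite_true]
    exact ⟨by simpa using this.1, this.2⟩
  · intro b hb
    obtain ⟨a, hab⟩ := hsurj b (by simpa using hb)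
    refine ⟨a.1, (G.mem_neighborFinset x a.1).1 a.2, fun a' => ⟨?_, ?_⟩⟩
    · rintro ⟨h1, h2⟩
      have ha' : a' ∈ G.neighborFinset x := by simpa using h1
      simp only [ha', dite_true] at h2
      have := hinj (hab.trans h2)
      rw [this]
    · rintro rfl
      refine ⟨(G.mem_neighborFinset x a.1).1 a.2, ?_⟩
      simp only [a.2, dite_true]
      exact hab.symm
end

/-- Any connected, non-complete strongly regular graph with parameters
$(n, k, λ, μ)$ satisfying $2·\max(λ, μ) ≤ k$ or $2λ < k$ admits a uniform
avoidance coupling of two simple random walks. -/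
theorem srg_admits_uac {V : Type*} [Fintype V] [DecidableEq V]
    (G : SimpleGraph V) [DecidableRel G.Adj]
    (n k lam mu : ℕ) (hsrg : G.IsSRGWith n k lam mu)
    (hconn : G.Connected)
    (hnoncomplete : ∃ x y : V, x ≠ y ∧ ¬ G.Adj x y)
    (hparam : 2 * max lam mu ≤ k ∨ 2 * lam < k) :
    ∃ (T : V × V → V × V → ℝ) (s : V × V → ℝ), IsUAC G T s := by
  classical
  have hdeg : ∀ v, (G.neighborFinset v).card = k := fun v => by
    rw [G.card_neighborFinset_eq_degree]; exact hsrg.regular v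
  have hcn : ∀ v w, Fintype.card (G.commonNeighbors v w) =
      (G.neighborFinset v ∩ G.neighborFinset w).card := by
    intro v w
    rw [← Set.toFinset_card]
    congr 1
    ext z
    simp [SimpleGraph.mem_commonNeighbors]
  have hlam : ∀ v w, G.Adj v w → (G.neighborFinset v ∩ G.neighborFinset w).card = lam := by
    intro v w h
    rw [← hcn]; exact hsrg.of_adj v w h
  have hmu : ∀ v w, v ≠ w → ¬ G.Adj v w →
      (G.neighborFinset v ∩ G.neighborFinset w).card = mu := by
    intro v w h h'
    rw [← hcn]; exact hsrg.of_not_adj h h'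
  have hp : (2 * lam ≤ k ∧ 2 * mu ≤ k) ∨ 2 * lam < k := by omega
  obtain ⟨x0, y0, hxy0, hna0⟩ := hnoncomplete
  have hk : 0 < k := by
    have : Nontrivial V := ⟨x0, y0, hxy0⟩
    rw [← hsrg.regular x0]
    exact hconn.preconnected.degree_pos_of_nontrivial x0
  have hkR : (k : ℝ) ≠ 0 := by exact_mod_cast hk.ne'
  let W : V × V → Prop := fun p => p.1 ≠ p.2 ∧ ¬ G.Adj p.1 p.2
  have hm : ∀ p : V × V, ∃ f : V → V, W p →
      (∀ a, G.Adj p.1 a → G.Adj p.2 (f a) ∧ a ≠ f a ∧ ¬ G.Adj a (f a)) ∧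
      ∀ b, G.Adj p.2 b → ∃ a, G.Adj p.1 a ∧ ∀ a', (G.Adj p.1 a' ∧ b = f a') ↔ a' = a := by
    intro p
    by_cases hW : W p
    · obtain ⟨f, hf⟩ := uac_match G k lam mu hdeg hlam hmu hp p.1 p.2 hW.1 hW.2
      exact ⟨f, fun _ => hf⟩
    · exact ⟨id, fun h => absurd h hW⟩
  choose f hf using hm
  let T : V × V → V × V → ℝ := fun p q =>
    if W p then (if G.Adj p.1 q.1 ∧ q.2 = f p q.1 then 1 / (k : ℝ) else 0)
    else if q = (x0, y0) then 1 else 0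
  have hrow : ∀ p, W p → ∀ x', ∑ y', T p (x', y') = if G.Adj p.1 x' then 1 / (k : ℝ) else 0 := by
    intro p hW x'
    by_cases h : G.Adj p.1 x' <;> simp [T, hW, h]
  have hcol : ∀ p, W p → ∀ y', ∑ x', T p (x', y') = if G.Adj p.2 y' then 1 / (k : ℝ) else 0 := by
    intro p hW y'
    by_cases h : G.Adj p.2 y'
    · obtain ⟨a, _, ha⟩ := (hf p hW).2 y' h
      simp [T, hW, h, ha]
    · have : ∀ x', ¬ (G.Adj p.1 x' ∧ y' = f p x') := by
        rintro x' ⟨h1, rfl⟩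
        exact h ((hf p hW).1 x' h1).1
      simp [T, hW, h, this]
  have hT0 : ∀ p q, 0 ≤ T p q := by
    intro p q
    simp only [T]
    split_ifs <;> positivity
  have hT1 : ∀ p, ∑ q, T p q = 1 := by
    intro p
    by_cases hW : W p
    · rw [Fintype.sum_prod_type]
      simp only [hrow p hW]
      rw [← Finset.sum_filter, ← SimpleGraph.neighborFinset_eq_filter, sum_const, hdeg]
      simp [hkR]
    · simp [T, hW]
  have hTW : ∀ p q, T p q ≠ 0 → W q := by
    intro p q h
    by_cases hW : W p
    · simp only [T, hW, if_true] at h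
      split_ifs at h with h1
      · have := (hf p hW).1 q.1 h1.1
        rw [← h1.2] at this
        exact this.2
      · exact absurd rfl h
    · simp only [T, hW, if_false] at h
      split_ifs at h with h1
      · rw [h1]; exact ⟨hxy0, hna0⟩
      · exact absurd rfl h
  have : Nonempty (V × V) := ⟨(x0, y0)⟩
  obtain ⟨s, hs0, hs1, hs⟩ := uac_stationary T hT0 hT1
  have hsW : ∀ q, s q ≠ 0 → W q := by
    intro q hq
    by_contra hW
    apply hq
    rw [← hs q]
    refine Finset.sum_eq_zero fun p _ => ?_
    have : T p q = 0 := by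
      by_contra h
      exact hW (hTW p q h)
    rw [this, mul_zero]
  refine ⟨T, s, hT0, hT1, hs0, hs1, hs, ?_, ?_, ?_⟩
  · intro x
    by_contra h
    exact (hsW _ h).1 rfl
  · intro x y x' y' h1 h2
    have hW := hsW _ h1.ne'
    have hW' := hTW _ _ h2.ne'
    refine ⟨?_, fun h => hW'.1 h.symm⟩
    rintro rfl
    simp only [T, hW, if_true] at h2
    rw [if_neg (fun h => hW.2 h.1)] at h2
    exact lt_irrefl _ h2
  · intro x y h
    have hW := hsW _ h.ne'
    refine ⟨fun x' => ?_, fun y' => ?_⟩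
    · rw [hsrg.regular x]; exact hrow _ hW x'
    · rw [hsrg.regular y]; exact hcol _ hW y'
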